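/- Under the stated network and cost assumptions, consider exact diffusion run with iteration-dependent positive step-sizes μ_{k,i} (in place of μ_k) that converge geometrically to the nominal step-sizes: there exist h ≥ 0 and ρ_A ∈ (0,1) such that |μ_{k,i} − μ_k| ≤ h μ_o ρ_A^{i+1} for all k and i (this is the situation of Algorithm 1′, where the Perron entries are learned by a power iteration). Then there exists μ̄ > 0 such that whenever 0 < μ_o ≤ μ̄, the iterates (W_i, Y_i) converge exponentially fast to (W⋆, Y⋆_o): there exist C ≥ 0 and ρ ∈ [0,1) with ∑_k ‖(W_i)_k − w⋆‖² + ∑_k ‖(Y_i)_k − (Y⋆_o)_k‖² ≤ C ρ^i for all i ≥ 0. -/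

import Mathlib

open Matrix

/-!
The proof is an energy argument for the error variables `w = W - W⋆` and `y = Y - Y⋆`.
Put `P = diag p` and `Q = P - V²`. Balancedness gives `Q = P Āᵀ = (P + A P) / 2`, which is positive
semidefinite, so `Q = Bᵀ B` (`posSemidef_half_add`). Multiplying the primal recursion by `P` and
eliminating the old dual variable turns the error recursion into
`Q (z - w⁺) = V y⁺`, `y⁺ = y + V w⁺`, with `z = w - μo D g - e`, where `D = diag (q / p)`, `g` is
the difference of the gradients at `W` and `W⋆`, and `e` is the error due to the inexact step-sizes.
This yields the exact identity (`energy_identity`)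
`‖B w⁺‖² + ‖y⁺‖² + ‖B (z - w⁺)‖² + ‖V w⁺‖² = ‖B z‖² + ‖y‖²`.

Since `P D = diag q`, the first-order part of `‖B z‖² - ‖B w‖²` is `-2 μo ∑ q_k ⟨w_k, g_k⟩` up to
a cross term controlled by `‖V w‖`. Two linear-algebra facts make the resulting decrease
quantitative. By primitivity the kernel of `V` consists of the constant vectors
(`constant_of_mulVec_eq_zero`), so `‖w‖²` is bounded by `‖w_{k₀}‖² + ‖V w‖²`
(`exists_norm_sq_le_block`), hence, by strong convexity of `J k₀`, by `∑ q_k ⟨w_k, g_k⟩ + ‖V w‖²`.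
And `y⁺` lies in the range of `V`, so `‖y⁺‖² ≲ ‖V y⁺‖² = ‖Q (z - w⁺)‖² ≲ ‖B (z - w⁺)‖²`
(`exists_norm_sq_le_on_range`). For small `μo` the energy
`‖B w‖² + ‖V w‖² / 2 + (1 + c) ‖y‖²` therefore contracts by a fixed factor, up to a multiple of
`‖e‖²` (`energy_decrease`). As `‖e_i‖² ≲ ρA ^ (2 i) (‖w_i‖² + 1)`, the energy satisfies the scalar
recursion `x_{i+1} ≤ (r + K s ^ i) x_i + K s ^ i`, whose solutions decay geometrically
(`geometric_decay`).
-/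

/-! ### A perturbed geometric recursion -/

lemma geometric_decay (x : ℕ → ℝ) (hx : ∀ i, 0 ≤ x i) (r s K : ℝ) (hr0 : 0 ≤ r) (hr1 : r < 1)
    (hs0 : 0 ≤ s) (hs1 : s < 1) (hK : 0 ≤ K)
    (hrec : ∀ i, x (i + 1) ≤ (r + K * s ^ i) * x i + K * s ^ i) :
    ∃ C : ℝ, 0 ≤ C ∧ ∃ ρ : ℝ, 0 ≤ ρ ∧ ρ < 1 ∧ ∀ i, x i ≤ C * ρ ^ i := by
  obtain ⟨ρ, hρ, hρ1⟩ := exists_between (max_lt (show (1 + r) / 2 < 1 by linarith) hs1)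
  have hρr : (1 + r) / 2 < ρ := lt_of_le_of_lt (le_max_left _ _) hρ
  have hρs : s < ρ := lt_of_le_of_lt (le_max_right _ _) hρ
  have hρ0 : 0 < ρ := by linarith
  have htend : Filter.Tendsto (fun i : ℕ => K * s ^ i) Filter.atTop (nhds 0) := by
    simpa using (tendsto_pow_atTop_nhds_zero_of_lt_one hs0 hs1).const_mul K
  obtain ⟨n, hn⟩ := Filter.eventually_atTop.1
    (htend.eventually (ge_mem_nhds (show (0 : ℝ) < (1 - r) / 2 by linarith)))
  have hgap : 0 < ρ - (1 + r) / 2 := by linarith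
  -- `C` dominates the finitely many initial ratios and the forcing term of the tail recursion.
  set C : ℝ := K / (ρ - (1 + r) / 2) + ∑ j ∈ Finset.range (n + 1), x j / ρ ^ j with hC
  have hterm : ∀ j, 0 ≤ x j / ρ ^ j := fun j => div_nonneg (hx j) (by positivity)
  have hsum : 0 ≤ ∑ j ∈ Finset.range (n + 1), x j / ρ ^ j :=
    Finset.sum_nonneg fun j _ => hterm j
  have hKd : 0 ≤ K / (ρ - (1 + r) / 2) := by positivity
  have hC0 : 0 ≤ C := by positivity
  have hCK : K ≤ C * (ρ - (1 + r) / 2) := by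
    rw [← div_le_iff₀ hgap]; linarith
  have hsmall : ∀ i, i ≤ n → x i ≤ C * ρ ^ i := by
    intro i hi
    rw [← div_le_iff₀ (by positivity)]
    have := Finset.single_le_sum (f := fun j => x j / ρ ^ j) (fun j _ => hterm j)
      (Finset.mem_range.2 (Nat.lt_succ_of_le hi))
    linarith
  refine ⟨C, hC0, ρ, hρ0.le, hρ1, fun i => ?_⟩
  rcases le_total i n with hi | hi
  · exact hsmall i hi
  · induction i, hi using Nat.le_induction with
    | base => exact hsmall n le_rfl
    | succ i hi ih =>
      have h1 := hrec i
      have h2 := hn i hi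
      have h3 : K * s ^ i ≤ K * ρ ^ i := by gcongr
      have h4 : (r + K * s ^ i) * x i ≤ (1 + r) / 2 * (C * ρ ^ i) :=
        mul_le_mul (by linarith) ih (hx i) (by linarith)
      have h5 : K * ρ ^ i ≤ C * (ρ - (1 + r) / 2) * ρ ^ i := by gcongr
      rw [pow_succ]
      nlinarith

/-! ### Monotonicity of gradients -/

section gradients

variable {E : Type*} [NormedAddCommGroup E] [InnerProductSpace ℝ E]

lemma fderiv_monotone_of_convexOn {f : E → ℝ} {f' : E → E →L[ℝ] ℝ}
    (hf' : ∀ x, HasFDerivAt f (f' x) x) (hf : ConvexOn ℝ Set.univ f) (x y : E) :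
    f' y (x - y) ≤ f' x (x - y) := by
  have hline : ConvexOn ℝ Set.univ (f ∘ AffineMap.lineMap (k := ℝ) y x) :=
    hf.comp_affineMap (AffineMap.lineMap (k := ℝ) y x)
  have hder : ∀ t : ℝ, HasDerivAt (f ∘ AffineMap.lineMap (k := ℝ) y x)
      (f' (AffineMap.lineMap y x t) (x - y)) t := fun t =>
    (hf' (AffineMap.lineMap y x t)).comp_hasDerivAt t AffineMap.hasDerivAt_lineMap
  have h0 := hline.le_slope_of_hasDerivAt (Set.mem_univ 0) (Set.mem_univ 1) one_pos (hder 0)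
  have h1 := hline.slope_le_of_hasDerivAt (Set.mem_univ 0) (Set.mem_univ 1) one_pos (hder 1)
  simpa using h0.trans h1

lemma inner_gradient_sub_ge [CompleteSpace E] {f : E → ℝ} {g : E → E} {ν : ℝ}
    (hg : ∀ x, HasGradientAt f (g x) x)
    (hf : StrongConvexOn Set.univ ν f) (x y : E) :
    ν * ‖x - y‖ ^ 2 ≤ inner ℝ (x - y) (g x - g y) := by
  have hder : ∀ x, HasFDerivAt (fun x => f x - ν / 2 * ‖x‖ ^ 2)
      (innerSL ℝ (g x) - (ν / 2) • (2 • innerSL ℝ x)) x := fun x =>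
    (hg x).hasFDerivAt.sub ((hasStrictFDerivAt_norm_sq x).hasFDerivAt.const_mul (ν / 2))
  have := fderiv_monotone_of_convexOn hder (strongConvexOn_iff_convex.1 hf) x y
  simp only [_root_.sub_apply, _root_.smul_apply, innerSL_apply_apply,
    smul_eq_mul, nsmul_eq_mul, Nat.cast_ofNat] at this
  have e : ‖x - y‖ ^ 2 = inner ℝ x (x - y) - inner ℝ y (x - y) := by
    rw [← inner_sub_left, real_inner_self_eq_norm_sq]
  rw [e, inner_sub_right (x - y), real_inner_comm (g x), real_inner_comm (g y)]
  linarith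

lemma inner_gradient_sub_nonneg [CompleteSpace E] {f : E → ℝ} {g : E → E}
    (hg : ∀ x, HasGradientAt f (g x) x)
    (hf : ConvexOn ℝ Set.univ f) (x y : E) : 0 ≤ inner ℝ (x - y) (g x - g y) := by
  simpa using inner_gradient_sub_ge hg (strongConvexOn_zero.2 hf) x y

end gradients

/-! ### Factorization through a matrix with smaller kernel -/

/-- Working with a matrix factor, rather than a norm bound, lets kernel inclusions pass to
`S ⊗ I` at no cost. -/
lemma exists_mul_eq_of_ker_le {n : Type*} [Fintype n] [DecidableEq n] (V D : Matrix n n ℝ)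
    (hker : ∀ x, V *ᵥ x = 0 → D *ᵥ x = 0) : ∃ B : Matrix n n ℝ, D = B * V := by
  let f := V.toLin'
  let g := D.toLin'
  have hle : LinearMap.ker f ≤ LinearMap.ker g := by
    intro x hx
    simp only [LinearMap.mem_ker, f, g, toLin'_apply] at hx ⊢
    exact hker x hx
  obtain ⟨φ, hφ⟩ := LinearMap.exists_extend
    (((LinearMap.ker f).liftQ g hle) ∘ₗ f.quotKerEquivRange.symm.toLinearMap)
  refine ⟨LinearMap.toMatrix' φ, ?_⟩
  apply Matrix.toLin'.injective
  rw [toLin'_mul, toLin'_toMatrix']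
  apply LinearMap.ext
  intro x
  have := LinearMap.congr_fun hφ ⟨f x, LinearMap.mem_range_self f x⟩
  simp only [LinearMap.comp_apply, Submodule.subtype_apply, LinearEquiv.coe_coe] at this
  rw [LinearMap.comp_apply]
  refine Eq.trans ?_ this.symm
  have h2 : f.quotKerEquivRange.symm ⟨f x, LinearMap.mem_range_self f x⟩
      = (LinearMap.ker f).mkQ x := by
    rw [LinearEquiv.symm_apply_eq]; rfl
  rw [h2]; simp [g]


/-! ### The energy argument -/

section energy

variable {F : Type*} [NormedAddCommGroup F] [InnerProductSpace ℝ F]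

/-- One step of the error recursion, with `Q = Bt B` and `Bt` the adjoint of `B`: the cross terms
`⟨w', Q (z - w')⟩` and `⟨y', V w'⟩` of the two squares cancel. -/
lemma energy_identity (V B Bt : F →L[ℝ] F)
    (hV : ∀ x y, inner ℝ (V x) y = inner ℝ x (V y))
    (hB : ∀ x y, inner ℝ (Bt x) y = inner ℝ x (B y)) {z w' y y' : F}
    (hprimal : Bt (B (z - w')) = V y') (hdual : y' = y + V w') :
    ‖B w'‖ ^ 2 + ‖y'‖ ^ 2 + ‖B (z - w')‖ ^ 2 + ‖V w'‖ ^ 2 = ‖B z‖ ^ 2 + ‖y‖ ^ 2 := by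
  have hz : B z = B w' + B (z - w') := by rw [← map_add]; congr 1; abel
  have hy : y = y' - V w' := by rw [hdual]; abel
  have hc : inner ℝ (B w') (B (z - w')) = inner ℝ y' (V w') := by
    rw [real_inner_comm, ← hB, hprimal, hV]
  rw [hz, hy, norm_add_sq_real, norm_sub_sq_real, hc]
  ring

/-- For small step-sizes the energy decreases by a multiple of `‖w‖² + ‖y'‖²`, up to the
perturbation `e`. The threshold `μbar` depends only on the operators and on `δ`, `C₃`; the constants
`c` and `K` may depend on `μo`. -/
lemma energy_decrease (V B Bt P D : F →L[ℝ] F)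
    (hV : ∀ x y, inner ℝ (V x) y = inner ℝ x (V y))
    (hB : ∀ x y, inner ℝ (Bt x) y = inner ℝ x (B y))
    (hP : ∀ x, P x = Bt (B x) + V (V x))
    (δ C₂ C₃ : ℝ) (hδ : 0 < δ) (hC₂ : 0 < C₂) (hC₃ : 0 < C₃) :
    ∃ μbar : ℝ, 0 < μbar ∧ ∀ μo : ℝ, 0 < μo → μo ≤ μbar →
      ∃ c : ℝ, 0 < c ∧ ∃ K : ℝ, 0 ≤ K ∧ ∀ w g e y w' y' : F,
        ‖g‖ ≤ δ * ‖w‖ →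
        ‖w‖ ^ 2 ≤ C₃ * (inner ℝ w (P (D g)) + ‖V w‖ ^ 2) →
        0 ≤ inner ℝ w (P (D g)) →
        Bt (B (w - μo • D g - e - w')) = V y' → y' = y + V w' →
        ‖y'‖ ^ 2 ≤ C₂ * ‖V y'‖ ^ 2 →
        ‖B w'‖ ^ 2 + ‖V w'‖ ^ 2 / 2 + (1 + c) * ‖y'‖ ^ 2 ≤
          ‖B w‖ ^ 2 + ‖V w‖ ^ 2 / 2 + ‖y‖ ^ 2 - c * ‖w‖ ^ 2 + K * ‖e‖ ^ 2 := by
  have hbd : ∀ T : F →L[ℝ] F, ∃ t : ℝ, 0 < t ∧ ∀ x, ‖T x‖ ≤ t * ‖x‖ := fun T =>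
    ⟨‖T‖ + 1, by positivity, fun x => (T.le_opNorm x).trans (by gcongr; linarith)⟩
  obtain ⟨b, hb0, nb⟩ := hbd B
  obtain ⟨bt, hbt0, nbt⟩ := hbd Bt
  obtain ⟨v, hv0, nv⟩ := hbd V
  obtain ⟨d, hd0, nd⟩ := hbd D
  -- `K₁` bounds the terms of second order in the step-size.
  set K₁ : ℝ := 4 * (v * (d * δ)) ^ 2 + 2 * (b * (d * δ)) ^ 2 with hK₁
  have hK₁0 : 0 < K₁ := by positivity
  refine ⟨min (1 / 8) (1 / (2 * C₃ * K₁)), by positivity, fun μo hμ0 hμ => ?_⟩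
  have hμ1 : μo ≤ 1 / 8 := hμ.trans (min_le_left _ _)
  have hμ2 : μo * (2 * C₃ * K₁) ≤ 1 := by
    rw [← le_div_iff₀ (by positivity)]; exact hμ.trans (min_le_right _ _)
  set θ : ℝ := μo / (2 * C₃) with hθ
  have hθ0 : 0 < θ := by positivity
  set c : ℝ := min (μo / C₃) (1 / (C₂ * bt ^ 2)) with hc
  have hc0 : 0 < c := by positivity
  refine ⟨c, hc0, 2 * b ^ 2 + b ^ 4 / θ, by positivity, ?_⟩
  intro w g e y w' y' hg hw hS hprimal hdual hy
  set S := inner ℝ w (P (D g)) with hSdef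
  have hid := energy_identity V B Bt hV hB hprimal hdual
  set ξ := B (w - μo • D g - e - w') with hξ
  set z := w - μo • D g - e with hz
  have hDg : ‖D g‖ ≤ d * δ * ‖w‖ := (nd g).trans (by
    rw [mul_assoc]; gcongr)
  -- Expansion of the quadratic form at `z`.
  have hBz : ‖B z‖ ^ 2 = ‖B w‖ ^ 2 - 2 * μo * S + 2 * μo * inner ℝ (V w) (V (D g))
      - 2 * inner ℝ (B w) (B e) + ‖B (μo • D g + e)‖ ^ 2 := by
    have h1 : B z = B w - B (μo • D g + e) := by rw [← map_sub]; congr 1; rw [hz]; abel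
    have h2 : S = inner ℝ (B w) (B (D g)) + inner ℝ (V w) (V (D g)) := by
      rw [hSdef, hP, inner_add_right, real_inner_comm, hB, hV, real_inner_comm]
    rw [h1, norm_sub_sq_real, h2]
    have h3 : inner ℝ (B w) (B (μo • D g + e))
        = μo * inner ℝ (B w) (B (D g)) + inner ℝ (B w) (B e) := by
      rw [map_add, map_smul, inner_add_right, inner_smul_right]
    rw [h3]; ring
  have hcross : 2 * μo * inner ℝ (V w) (V (D g)) ≤
      ‖V w‖ ^ 2 / 4 + 4 * μo ^ 2 * (v * (d * δ)) ^ 2 * ‖w‖ ^ 2 := by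
    have h1 := real_inner_le_norm (V w) (V (D g))
    have h2 : ‖V (D g)‖ ≤ v * (d * δ) * ‖w‖ := (nv _).trans (by
      rw [mul_assoc]; gcongr)
    have h3 : inner ℝ (V w) (V (D g)) ≤ ‖V w‖ * (v * (d * δ) * ‖w‖) :=
      h1.trans (by gcongr)
    have h4 : 2 * μo * inner ℝ (V w) (V (D g)) ≤ 2 * μo * (‖V w‖ * (v * (d * δ) * ‖w‖)) := by
      gcongr
    have h5 : 0 ≤ (‖V w‖ / 2 - 2 * μo * (v * (d * δ)) * ‖w‖) ^ 2 := sq_nonneg _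
    have h6 : (‖V w‖ / 2 - 2 * μo * (v * (d * δ)) * ‖w‖) ^ 2 = ‖V w‖ ^ 2 / 4
        - 2 * μo * (‖V w‖ * (v * (d * δ) * ‖w‖))
        + 4 * μo ^ 2 * (v * (d * δ)) ^ 2 * ‖w‖ ^ 2 := by ring
    linarith
  have hpert : - 2 * inner ℝ (B w) (B e) ≤ θ * ‖w‖ ^ 2 + b ^ 4 / θ * ‖e‖ ^ 2 := by
    have h1 := abs_le.1 (abs_real_inner_le_norm (B w) (B e))
    have h2 : ‖B w‖ * ‖B e‖ ≤ (b * ‖w‖) * (b * ‖e‖) :=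
      mul_le_mul (nb _) (nb _) (norm_nonneg _) (by positivity)
    have h3 : 0 ≤ (θ * ‖w‖ - b ^ 2 * ‖e‖) ^ 2 / θ := by positivity
    have h4 : (θ * ‖w‖ - b ^ 2 * ‖e‖) ^ 2 / θ
        = θ * ‖w‖ ^ 2 - 2 * ((b * ‖w‖) * (b * ‖e‖)) + b ^ 4 / θ * ‖e‖ ^ 2 := by
      field_simp; ring
    linarith
  have hquad : ‖B (μo • D g + e)‖ ^ 2 ≤
      2 * μo ^ 2 * (b * (d * δ)) ^ 2 * ‖w‖ ^ 2 + 2 * b ^ 2 * ‖e‖ ^ 2 := by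
    have h1 : ‖B (μo • D g + e)‖ ≤ b * (μo * (d * δ * ‖w‖) + ‖e‖) := by
      refine (nb _).trans ?_
      gcongr
      refine (norm_add_le _ _).trans ?_
      rw [norm_smul, Real.norm_of_nonneg hμ0.le]
      gcongr
    have h2 : ‖B (μo • D g + e)‖ ^ 2 ≤ (b * (μo * (d * δ * ‖w‖) + ‖e‖)) ^ 2 := by gcongr
    have h3 : 0 ≤ (b * (μo * (d * δ * ‖w‖)) - b * ‖e‖) ^ 2 := sq_nonneg _
    have h4 : 2 * μo ^ 2 * (b * (d * δ)) ^ 2 * ‖w‖ ^ 2 + 2 * b ^ 2 * ‖e‖ ^ 2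
        = (b * (μo * (d * δ * ‖w‖) + ‖e‖)) ^ 2 + (b * (μo * (d * δ * ‖w‖)) - b * ‖e‖) ^ 2 := by
      ring
    linarith
  have hdiss : 2 * (μo / C₃) * ‖w‖ ^ 2 ≤ 2 * μo * S + ‖V w‖ ^ 2 / 4 := by
    have h1 : ‖w‖ ^ 2 / C₃ ≤ S + ‖V w‖ ^ 2 := by rwa [div_le_iff₀' hC₃]
    have h2 : 2 * (μo / C₃) * ‖w‖ ^ 2 = 2 * μo * (‖w‖ ^ 2 / C₃) := by ring
    have h3 : 2 * μo * (‖w‖ ^ 2 / C₃) ≤ 2 * μo * (S + ‖V w‖ ^ 2) := by gcongr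
    have h4 : 2 * μo * ‖V w‖ ^ 2 ≤ 2 * (1 / 8) * ‖V w‖ ^ 2 := by gcongr
    linarith
  have hsmall : μo ^ 2 * K₁ * ‖w‖ ^ 2 ≤ θ * ‖w‖ ^ 2 := by
    gcongr
    rw [hθ, le_div_iff₀ (by positivity)]
    calc μo ^ 2 * K₁ * (2 * C₃) = μo * (μo * (2 * C₃ * K₁)) := by ring
      _ ≤ μo * 1 := by gcongr
      _ = μo := mul_one _
  have hθc : 2 * θ = μo / C₃ := by rw [hθ]; field_simp
  have hcw : c * ‖w‖ ^ 2 ≤ (μo / C₃) * ‖w‖ ^ 2 := by gcongr; exact min_le_left _ _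
  have hcy : c * ‖y'‖ ^ 2 ≤ ‖ξ‖ ^ 2 := by
    have h1 : ‖V y'‖ ^ 2 ≤ (bt * ‖ξ‖) ^ 2 := by rw [← hprimal]; gcongr; exact nbt _
    have h2 : c * (C₂ * bt ^ 2) ≤ 1 := by
      rw [← le_div_iff₀ (by positivity)]; exact min_le_right _ _
    calc c * ‖y'‖ ^ 2 ≤ c * (C₂ * (bt * ‖ξ‖) ^ 2) := by gcongr; exact hy.trans (by gcongr)
      _ = c * (C₂ * bt ^ 2) * ‖ξ‖ ^ 2 := by ring
      _ ≤ 1 * ‖ξ‖ ^ 2 := by gcongr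
      _ = _ := one_mul _
  have hK : μo ^ 2 * K₁ * ‖w‖ ^ 2 = 4 * μo ^ 2 * (v * (d * δ)) ^ 2 * ‖w‖ ^ 2
      + 2 * μo ^ 2 * (b * (d * δ)) ^ 2 * ‖w‖ ^ 2 := by rw [hK₁]; ring
  have hVw' := sq_nonneg ‖V w'‖
  rw [← hθc] at hdiss hcw
  linarith

/-- The primal energy is coercive because `P = Bt B + V²` has a left inverse. -/
lemma exists_norm_sq_le_energy (V B Bt P I : F →L[ℝ] F)
    (hPsplit : ∀ x, P x = Bt (B x) + V (V x)) (hIP : ∀ x, I (P x) = x) :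
    ∃ C : ℝ, 0 ≤ C ∧ ∀ x, ‖x‖ ^ 2 ≤ C * (‖B x‖ ^ 2 + ‖V x‖ ^ 2 / 2) := by
  refine ⟨4 * (‖I‖ * (‖Bt‖ + ‖V‖)) ^ 2, by positivity, fun x => ?_⟩
  set t := ‖I‖ * (‖Bt‖ + ‖V‖) with ht
  have ht0 : 0 ≤ t := by positivity
  have h1 : ‖x‖ ≤ t * (‖B x‖ + ‖V x‖) := by
    calc ‖x‖ = ‖I (P x)‖ := by rw [hIP]
      _ ≤ ‖I‖ * ‖P x‖ := I.le_opNorm _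
      _ ≤ ‖I‖ * (‖Bt‖ * ‖B x‖ + ‖V‖ * ‖V x‖) := by
        gcongr
        rw [hPsplit]
        exact (norm_add_le _ _).trans (add_le_add (Bt.le_opNorm _) (V.le_opNorm _))
      _ ≤ ‖I‖ * ((‖Bt‖ + ‖V‖) * (‖B x‖ + ‖V x‖)) := by
        gcongr
        have h2 : 0 ≤ ‖Bt‖ * ‖V x‖ := by positivity
        have h3 : 0 ≤ ‖V‖ * ‖B x‖ := by positivity
        linarith
      _ = _ := by rw [ht]; ring
  have h4 : ‖x‖ ^ 2 ≤ t ^ 2 * (‖B x‖ + ‖V x‖) ^ 2 := by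
    rw [← mul_pow]; gcongr
  have h5 : (‖B x‖ + ‖V x‖) ^ 2 ≤ 4 * (‖B x‖ ^ 2 + ‖V x‖ ^ 2 / 2) := by
    nlinarith [sq_nonneg (‖B x‖ - ‖V x‖), sq_nonneg ‖B x‖]
  calc ‖x‖ ^ 2 ≤ t ^ 2 * (4 * (‖B x‖ ^ 2 + ‖V x‖ ^ 2 / 2)) := h4.trans (by gcongr)
    _ = _ := by ring

/-- The one-step decrease, together with a geometrically small perturbation, gives geometric
convergence of both error variables. -/
lemma energy_convergence (V B : F →L[ℝ] F) (w y e : ℕ → F) {c K C₄ s K₁ K₂ : ℝ}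
    (hc : 0 < c) (hK : 0 ≤ K) (hC₄ : 0 ≤ C₄) (hs0 : 0 ≤ s) (hs1 : s < 1)
    (hK₁ : 0 ≤ K₁) (hK₂ : 0 ≤ K₂)
    (hlow : ∀ x, ‖x‖ ^ 2 ≤ C₄ * (‖B x‖ ^ 2 + ‖V x‖ ^ 2 / 2))
    (he : ∀ i, ‖e i‖ ^ 2 ≤ s ^ i * (K₁ * ‖w i‖ ^ 2 + K₂))
    (hstep : ∀ i, ‖B (w (i + 1))‖ ^ 2 + ‖V (w (i + 1))‖ ^ 2 / 2 + (1 + c) * ‖y (i + 1)‖ ^ 2 ≤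
      ‖B (w i)‖ ^ 2 + ‖V (w i)‖ ^ 2 / 2 + ‖y i‖ ^ 2 - c * ‖w i‖ ^ 2 + K * ‖e i‖ ^ 2) :
    ∃ C : ℝ, 0 ≤ C ∧ ∃ ρ : ℝ, 0 ≤ ρ ∧ ρ < 1 ∧
      ∀ i, ‖w i‖ ^ 2 + ‖y i‖ ^ 2 ≤ C * ρ ^ i := by
  set a : F → ℝ := fun x => ‖B x‖ ^ 2 + ‖V x‖ ^ 2 / 2 with ha
  have ha0 : ∀ x, 0 ≤ a x := fun x => by simp only [ha]; positivity
  set L : ℕ → ℝ := fun i => a (w i) + (1 + c) * ‖y i‖ ^ 2 with hL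
  have hL0 : ∀ i, 0 ≤ L i := fun i => add_nonneg (ha0 _) (by positivity)
  have haL : ∀ i, a (w i) ≤ L i := fun i => by
    have : 0 ≤ (1 + c) * ‖y i‖ ^ 2 := by positivity
    simp only [hL]; linarith
  -- Enlarging the upper bound of the energy by `c` keeps the factor `1 - c / κ` nonnegative.
  set κ : ℝ := ‖B‖ ^ 2 + ‖V‖ ^ 2 / 2 + c with hκ
  have hκ0 : 0 < κ := by positivity
  have hup : ∀ x, a x ≤ κ * ‖x‖ ^ 2 := fun x => by
    have h1 : ‖B x‖ ^ 2 ≤ (‖B‖ * ‖x‖) ^ 2 := by gcongr; exact B.le_opNorm x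
    have h2 : ‖V x‖ ^ 2 ≤ (‖V‖ * ‖x‖) ^ 2 := by gcongr; exact V.le_opNorm x
    have h3 : 0 ≤ c * ‖x‖ ^ 2 := by positivity
    simp only [ha, hκ]
    nlinarith
  set r : ℝ := max (1 - c / κ) (1 / (1 + c)) with hr
  have hr0 : 0 ≤ r := le_max_of_le_right (by positivity)
  have hr1 : r < 1 := by
    refine max_lt (by have : 0 < c / κ := by positivity
                      linarith) ?_
    rw [div_lt_one (by positivity)]; linarith
  set K' : ℝ := K * (K₁ * C₄ + K₂) with hK'
  have hK'0 : 0 ≤ K' := by positivity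
  have hrec : ∀ i, L (i + 1) ≤ (r + K' * s ^ i) * L i + K' * s ^ i := by
    intro i
    have h1 : a (w i) - c * ‖w i‖ ^ 2 ≤ r * a (w i) := by
      have h2 : c / κ * a (w i) ≤ c * ‖w i‖ ^ 2 := by
        calc c / κ * a (w i) ≤ c / κ * (κ * ‖w i‖ ^ 2) := by gcongr; exact hup _
          _ = c * ‖w i‖ ^ 2 := by field_simp
      have h3 : (1 - c / κ) * a (w i) ≤ r * a (w i) :=
        mul_le_mul_of_nonneg_right (le_max_left _ _) (ha0 _)
      linarith
    have h4 : ‖y i‖ ^ 2 ≤ r * ((1 + c) * ‖y i‖ ^ 2) := by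
      calc ‖y i‖ ^ 2 = 1 / (1 + c) * ((1 + c) * ‖y i‖ ^ 2) := by field_simp
        _ ≤ _ := mul_le_mul_of_nonneg_right (le_max_right _ _) (by positivity)
    have h5 : K * ‖e i‖ ^ 2 ≤ K' * s ^ i * L i + K' * s ^ i := by
      have h6 : ‖w i‖ ^ 2 ≤ C₄ * L i := (hlow _).trans (by gcongr; exact haL i)
      have h7 : 0 ≤ K * s ^ i * K₂ * L i := by have := hL0 i; positivity
      have h8 : 0 ≤ K * s ^ i * (K₁ * C₄) := by positivity
      calc K * ‖e i‖ ^ 2 ≤ K * (s ^ i * (K₁ * (C₄ * L i) + K₂)) := by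
            gcongr; exact (he i).trans (by gcongr)
        _ ≤ K' * s ^ i * L i + K' * s ^ i := by rw [hK']; linarith
    have h9 := hstep i
    simp only [hL, ha] at h1 h5 ⊢
    linarith
  obtain ⟨C, hC, ρ, hρ0, hρ1, hfin⟩ := geometric_decay L hL0 r s K' hr0 hr1 hs0 hs1 hK'0 hrec
  refine ⟨(C₄ + 1) * C, by positivity, ρ, hρ0, hρ1, fun i => ?_⟩
  have h1 : ‖w i‖ ^ 2 ≤ C₄ * L i := (hlow _).trans (by gcongr; exact haL i)
  have h2 : ‖y i‖ ^ 2 ≤ L i := by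
    have := ha0 (w i)
    have : 0 ≤ c * ‖y i‖ ^ 2 := by positivity
    simp only [hL]; linarith
  calc ‖w i‖ ^ 2 + ‖y i‖ ^ 2 ≤ (C₄ + 1) * L i := by linarith
    _ ≤ (C₄ + 1) * (C * ρ ^ i) := by gcongr; exact hfin i
    _ = _ := by ring

end energy

/-! ### The combination matrix -/

section network

variable {N : ℕ}

/-- If `V x = 0` then `Aᵀ x = x`, so `(A ^ m)ᵀ x = x` with strictly positive averaging weights. -/
lemma constant_of_mulVec_eq_zero (A : Matrix (Fin N) (Fin N) ℝ)
    (hAleft : ∀ j, ∑ i, A i j = 1)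
    (hAprim : ∃ m : ℕ, 0 < m ∧ ∀ i j, 0 < (A ^ m) i j)
    (p : Fin N → ℝ) (hp : ∀ k, 0 < p k)
    (hbal : Matrix.diagonal p * Aᵀ = A * Matrix.diagonal p)
    (V : Matrix (Fin N) (Fin N) ℝ)
    (hVsq : V * V = (2⁻¹ : ℝ) • (Matrix.diagonal p - A * Matrix.diagonal p))
    (x : Fin N → ℝ) (hx : V *ᵥ x = 0) (k l : Fin N) : x k = x l := by
  have hfix : Aᵀ *ᵥ x = x := by
    have h1 : (V * V) *ᵥ x = 0 := by rw [← mulVec_mulVec, hx, mulVec_zero]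
    rw [hVsq, ← hbal, smul_mulVec, sub_mulVec, ← mulVec_mulVec] at h1
    have h2 := (smul_eq_zero.1 h1).resolve_left (by norm_num)
    funext j
    have h3 := congrFun h2 j
    simp only [Pi.sub_apply, mulVec_diagonal, Pi.zero_apply] at h3
    have h4 : p j * (x j - (Aᵀ *ᵥ x) j) = 0 := by linarith
    have h5 := (mul_eq_zero.1 h4).resolve_left (hp j).ne'
    linarith
  obtain ⟨m, -, hm⟩ := hAprim
  have hpow : ∀ n : ℕ, (A ^ n)ᵀ *ᵥ x = x ∧ ∀ j, ∑ i, (A ^ n) i j = 1 := by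
    intro n
    induction n with
    | zero => simp [Matrix.one_apply]
    | succ n ih =>
      refine ⟨?_, fun j => ?_⟩
      · rw [pow_succ, transpose_mul, ← mulVec_mulVec, ih.1, hfix]
      · simp only [pow_succ, Matrix.mul_apply]
        rw [Finset.sum_comm]
        simp only [← Finset.sum_mul, ih.2, one_mul, hAleft]
  obtain ⟨hm1, hm2⟩ := hpow m
  -- Maximum principle: at a maximizer, `x` is a strictly positive average of its values.
  have : Nonempty (Fin N) := ⟨k⟩
  obtain ⟨j, hj⟩ := Finite.exists_max x
  have hzero : ∑ i, (A ^ m) i j * (x j - x i) = 0 := by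
    have h1 := congrFun hm1 j
    simp only [mulVec, dotProduct, transpose_apply] at h1
    simp only [mul_sub, Finset.sum_sub_distrib, ← Finset.sum_mul, hm2 j, h1]
    ring
  have hall := (Finset.sum_eq_zero_iff_of_nonneg (fun i _ =>
    mul_nonneg (hm i j).le (sub_nonneg.2 (hj i)))).1 hzero
  have heq : ∀ i, x i = x j := fun i => by
    have := (mul_eq_zero.1 (hall i (Finset.mem_univ i))).resolve_left (hm i j).ne'
    linarith
  rw [heq k, heq l]

/-- Four times the quadratic form at `x` is `∑ k l, A k l * p l * (x k + x l) ^ 2`. -/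
lemma posSemidef_half_add (A : Matrix (Fin N) (Fin N) ℝ)
    (hApos : ∀ i j, 0 ≤ A i j) (hAleft : ∀ j, ∑ i, A i j = 1)
    (p : Fin N → ℝ) (hp : ∀ k, 0 < p k) (hAp : A.mulVec p = p)
    (hbal : Matrix.diagonal p * Aᵀ = A * Matrix.diagonal p) :
    ((2⁻¹ : ℝ) • (Matrix.diagonal p + A * Matrix.diagonal p)).PosSemidef := by
  refine PosSemidef.of_dotProduct_mulVec_nonneg ?_ fun x => ?_
  · rw [Matrix.IsHermitian, conjTranspose_eq_transpose_of_trivial, transpose_smul, transpose_add,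
      transpose_mul, diagonal_transpose, hbal]
  · have h1 : ∑ k, ∑ l, A k l * p l * x k ^ 2 = ∑ k, p k * x k ^ 2 := by
      refine Finset.sum_congr rfl fun k _ => ?_
      rw [← Finset.sum_mul]
      congr 1
      exact congrFun hAp k
    have h2 : ∑ k, ∑ l, A k l * p l * x l ^ 2 = ∑ k, p k * x k ^ 2 := by
      rw [Finset.sum_comm]
      refine Finset.sum_congr rfl fun k _ => ?_
      rw [← Finset.sum_mul, ← Finset.sum_mul, hAleft, one_mul]
    have h3 : 0 ≤ ∑ k, ∑ l, A k l * p l * (x k + x l) ^ 2 :=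
      Finset.sum_nonneg fun k _ => Finset.sum_nonneg fun l _ =>
        mul_nonneg (mul_nonneg (hApos k l) (hp l).le) (sq_nonneg _)
    have h4 : ∑ k, ∑ l, A k l * p l * (x k + x l) ^ 2 =
        ∑ k, ∑ l, A k l * p l * x k ^ 2 + 2 * (∑ k, ∑ l, A k l * p l * x k * x l)
          + ∑ k, ∑ l, A k l * p l * x l ^ 2 := by
      simp only [Finset.mul_sum, ← Finset.sum_add_distrib]
      refine Finset.sum_congr rfl fun k _ => Finset.sum_congr rfl fun l _ => ?_
      ring
    have h5 : star x ⬝ᵥ ((2⁻¹ : ℝ) • (diagonal p + A * diagonal p)) *ᵥ x =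
        2⁻¹ * (∑ k, p k * x k ^ 2 + ∑ k, ∑ l, A k l * p l * x k * x l) := by
      rw [smul_mulVec, dotProduct_smul, add_mulVec, dotProduct_add, smul_eq_mul]
      congr 2
      · simp only [dotProduct, mulVec_diagonal, star_trivial]
        exact Finset.sum_congr rfl fun k _ => by ring
      · simp only [dotProduct, mulVec, star_trivial, mul_diagonal, Finset.mul_sum]
        exact Finset.sum_congr rfl fun k _ => Finset.sum_congr rfl fun l _ => by ring
    rw [h5]
    linarith

end network

/-! ### Block vectors -/

section blocks

variable {N : ℕ} {E : Type*} [NormedAddCommGroup E] [InnerProductSpace ℝ E]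
  [FiniteDimensional ℝ E]

/-- Block vectors with `N` blocks in `E`, carrying the Euclidean (`ℓ²`) norm. -/
abbrev BlockVec (N : ℕ) (E : Type*) [NormedAddCommGroup E] : Type _ := PiLp 2 (fun _ : Fin N => E)

/-- The operator `S ⊗ I` on block vectors. -/
noncomputable def blockMap (S : Matrix (Fin N) (Fin N) ℝ) :
    BlockVec N E →L[ℝ] BlockVec N E :=
  LinearMap.toContinuousLinearMap
    { toFun := fun x => WithLp.toLp 2 fun k => ∑ l, S k l • x l
      map_add' := fun x y => by
        ext1 k
        simp [smul_add, Finset.sum_add_distrib]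
      map_smul' := fun c x => by
        ext1 k
        simp [Finset.smul_sum, smul_comm c] }

lemma blockMap_apply (S : Matrix (Fin N) (Fin N) ℝ) (x : BlockVec N E)
    (k : Fin N) : blockMap S x k = ∑ l, S k l • x l := rfl

lemma blockMap_diagonal_apply (d : Fin N → ℝ) (x : BlockVec N E) (k : Fin N) :
    blockMap (Matrix.diagonal d) x k = d k • x k := by
  rw [blockMap_apply, Finset.sum_eq_single k]
  · simp
  · intro l _ hl; simp [Matrix.diagonal_apply_ne' _ hl]
  · simp

lemma blockMap_mul (S T : Matrix (Fin N) (Fin N) ℝ) (x : BlockVec N E) :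
    blockMap (S * T) x = blockMap S (blockMap T x) := by
  ext1 k
  simp only [blockMap_apply, Matrix.mul_apply, Finset.sum_smul, Finset.smul_sum, smul_smul]
  rw [Finset.sum_comm]

lemma blockMap_add (S T : Matrix (Fin N) (Fin N) ℝ) (x : BlockVec N E) :
    blockMap (S + T) x = blockMap S x + blockMap T x := by
  ext1 k
  simp [blockMap_apply, add_smul, Finset.sum_add_distrib]

lemma blockMap_sub (S T : Matrix (Fin N) (Fin N) ℝ) (x : BlockVec N E) :
    blockMap (S - T) x = blockMap S x - blockMap T x := by
  ext1 k
  simp [blockMap_apply, sub_smul, Finset.sum_sub_distrib]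

lemma inner_blockMap_left (S : Matrix (Fin N) (Fin N) ℝ) (x y : BlockVec N E) :
    inner ℝ (blockMap S x) y = inner ℝ x (blockMap Sᵀ y) := by
  simp only [PiLp.inner_apply, blockMap_apply, sum_inner, inner_sum, inner_smul_left,
    inner_smul_right, transpose_apply]
  rw [Finset.sum_comm]
  simp

end blocks

/-! ### Kernel and range estimates for `V` -/

section norms

variable {N : ℕ} {E : Type*} [NormedAddCommGroup E] [InnerProductSpace ℝ E]
  [FiniteDimensional ℝ E]

open scoped MatrixOrder in
lemma exists_eq_transpose_mul_self {Q : Matrix (Fin N) (Fin N) ℝ} (hQ : Q.PosSemidef) :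
    ∃ B : Matrix (Fin N) (Fin N) ℝ, Q = Bᵀ * B := by
  obtain ⟨B, hB⟩ := CStarAlgebra.nonneg_iff_eq_star_mul_self.1 hQ.nonneg
  exact ⟨B, by rw [hB, star_eq_conjTranspose, conjTranspose_eq_transpose_of_trivial]⟩

lemma mulVec_eq_zero_of_mulVec_mulVec (V : Matrix (Fin N) (Fin N) ℝ) (hV : Vᵀ = V)
    (x : Fin N → ℝ) (hx : V *ᵥ (V *ᵥ x) = 0) : V *ᵥ x = 0 := by
  refine dotProduct_self_eq_zero.1 ?_
  rw [dotProduct_mulVec, ← mulVec_transpose, hV, hx, zero_dotProduct]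

/-- A symmetric `V` satisfies `V = T V²` for some `T`, so `V` is bounded below on its range. -/
lemma exists_norm_sq_le_on_range (V : Matrix (Fin N) (Fin N) ℝ) (hV : Vᵀ = V) :
    ∃ C : ℝ, 0 < C ∧ ∀ y x : BlockVec N E, y = blockMap V x →
      ‖y‖ ^ 2 ≤ C * ‖blockMap V y‖ ^ 2 := by
  obtain ⟨T, hT⟩ := exists_mul_eq_of_ker_le (V * V) V (fun x hx => by
    rw [← mulVec_mulVec] at hx
    exact mulVec_eq_zero_of_mulVec_mulVec V hV x hx)
  refine ⟨(‖blockMap (E := E) T‖ + 1) ^ 2, by positivity, ?_⟩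
  rintro y x rfl
  have h1 : blockMap V x = blockMap T (blockMap V (blockMap V x)) := by
    rw [← blockMap_mul V V, ← blockMap_mul, ← hT]
  rw [← mul_pow]
  refine pow_le_pow_left₀ (norm_nonneg _) ?_ 2
  conv_lhs => rw [h1]
  refine (ContinuousLinearMap.le_opNorm _ _).trans ?_
  gcongr
  linarith

/-- If the kernel of `V` contains only constant vectors, the differences `w k - w k₀` are controlled
by `V w`. -/
lemma exists_norm_sq_le_block (V : Matrix (Fin N) (Fin N) ℝ)
    (hker : ∀ x, V *ᵥ x = 0 → ∀ k l, x k = x l) (k₀ : Fin N) :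
    ∃ C : ℝ, 0 < C ∧ ∀ w : BlockVec N E,
      ‖w‖ ^ 2 ≤ C * (‖w k₀‖ ^ 2 + ‖blockMap V w‖ ^ 2) := by
  set R : Matrix (Fin N) (Fin N) ℝ := 1 - Matrix.of fun _ l => if l = k₀ then 1 else 0 with hR
  have hRx : ∀ w : BlockVec N E, ∀ k, blockMap R w k = w k - w k₀ := by
    intro w k
    rw [hR, blockMap_sub, ← diagonal_one, PiLp.sub_apply, blockMap_diagonal_apply, blockMap_apply]
    simp
  obtain ⟨T, hT⟩ := exists_mul_eq_of_ker_le V R (fun x hx => by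
    funext k
    rw [hR, sub_mulVec, one_mulVec, Pi.sub_apply]
    simp [mulVec, dotProduct, hker x hx k k₀])
  refine ⟨2 * ‖blockMap (E := E) T‖ ^ 2 + 2 * N + 1, by positivity, fun w => ?_⟩
  have h1 : ‖blockMap R w‖ ^ 2 ≤ ‖blockMap (E := E) T‖ ^ 2 * ‖blockMap V w‖ ^ 2 := by
    rw [hT, blockMap_mul, ← mul_pow]
    exact pow_le_pow_left₀ (norm_nonneg _) (ContinuousLinearMap.le_opNorm _ _) 2
  have h2 : ‖w‖ ^ 2 ≤ 2 * ‖blockMap R w‖ ^ 2 + 2 * N * ‖w k₀‖ ^ 2 := by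
    rw [PiLp.norm_sq_eq_of_L2, PiLp.norm_sq_eq_of_L2, Finset.mul_sum]
    have : 2 * N * ‖w k₀‖ ^ 2 = ∑ _k : Fin N, 2 * ‖w k₀‖ ^ 2 := by simp; ring
    rw [this, ← Finset.sum_add_distrib]
    refine Finset.sum_le_sum fun k _ => ?_
    rw [hRx]
    have h3 : ‖w k‖ ≤ ‖w k - w k₀‖ + ‖w k₀‖ := by
      simpa using norm_add_le (w k - w k₀) (w k₀)
    have h4 : ‖w k‖ ^ 2 ≤ (‖w k - w k₀‖ + ‖w k₀‖) ^ 2 := by gcongr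
    nlinarith [sq_nonneg (‖w k - w k₀‖ - ‖w k₀‖)]
  have h5 : 0 ≤ ‖blockMap (E := E) T‖ ^ 2 * ‖w k₀‖ ^ 2 := by positivity
  have h6 : 0 ≤ (N : ℝ) * ‖blockMap V w‖ ^ 2 := by positivity
  have h7 := sq_nonneg ‖w k₀‖
  have h8 := sq_nonneg ‖blockMap V w‖
  nlinarith

end norms

/-! ### Convergence of exact diffusion -/

set_option maxHeartbeats 1600000 in
/-- Linear convergence of exact diffusion with adaptive (power-iteration) step-sizes
(Algorithm 1′): in the network setup with cost assumptions, if the iteration-dependent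
positive step-sizes `μ_{k,i}` converge geometrically to the nominal ones
`μ_k = q_k μ_o / p_k`, i.e. `|μ_{k,i} − μ_k| ≤ h μ_o ρ_A^{i+1}` with `h ≥ 0` and
`ρ_A ∈ (0,1)`, then there exists `μ̄ > 0` such that for every `0 < μ_o ≤ μ̄` the iterates
`(W_i, Y_i)` converge exponentially fast to `(W⋆, Y⋆_o)`. -/
theorem stmt_1 (N M : ℕ) (hN : 0 < N) (A : Matrix (Fin N) (Fin N) ℝ)
    (hApos : ∀ i j, 0 ≤ A i j)
    (hAleft : ∀ j, ∑ i, A i j = 1)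
    (hAprim : ∃ m : ℕ, 0 < m ∧ ∀ i j, 0 < (A ^ m) i j)
    (p : Fin N → ℝ) (hp : ∀ k, 0 < p k) (hpsum : ∑ k, p k = 1)
    (hAp : A.mulVec p = p)
    (hbal : Matrix.diagonal p * Aᵀ = A * Matrix.diagonal p)
    (V : Matrix (Fin N) (Fin N) ℝ) (hV : V.PosSemidef)
    (hVsq : V * V = (2⁻¹ : ℝ) • (Matrix.diagonal p - A * Matrix.diagonal p))
    (J : Fin N → EuclideanSpace ℝ (Fin M) → ℝ)
    (gJ : Fin N → EuclideanSpace ℝ (Fin M) → EuclideanSpace ℝ (Fin M))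
    (hgJ : ∀ k x, HasGradientAt (J k) (gJ k x) x)
    (hconv : ∀ k, ConvexOn ℝ Set.univ (J k))
    (δ : ℝ) (hδ : 0 < δ)
    (hLip : ∀ k x y, ‖gJ k x - gJ k y‖ ≤ δ * ‖x - y‖)
    (ν : ℝ) (hν : 0 < ν) (k₀ : Fin N)
    (hsc : StrongConvexOn Set.univ ν (J k₀))
    (q : Fin N → ℝ) (hq : ∀ k, 0 < q k)
    (wstar : EuclideanSpace ℝ (Fin M))
    (hwstar : ∀ w, ∑ k, q k * J k wstar ≤ ∑ k, q k * J k w)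
    (h : ℝ) (hh : 0 ≤ h) (ρA : ℝ) (hρA0 : 0 < ρA) (hρA1 : ρA < 1) :
    ∃ μbar : ℝ, 0 < μbar ∧
      ∀ μo : ℝ, 0 < μo → μo ≤ μbar →
        ∀ (μ' : Fin N → ℕ → ℝ)
          (W Y : ℕ → Fin N → EuclideanSpace ℝ (Fin M))
          (Ystar : Fin N → EuclideanSpace ℝ (Fin M)),
          -- positive, geometrically convergent step-sizes
          (∀ k i, 0 < μ' k i) →
          (∀ k i, |μ' k i - q k * μo / p k| ≤ h * μo * ρA ^ (i + 1)) →
          -- `Y⋆_o` lies in the range of `V ⊗ I_M`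
          (∃ Xv : Fin N → EuclideanSpace ℝ (Fin M),
            Ystar = fun k => ∑ l, V k l • Xv l) →
          -- optimality condition with the nominal step-sizes `μ_k = q_k μ_o / p_k`
          (∀ k, (∑ l, (((2⁻¹ : ℝ) • ((1 : Matrix (Fin N) (Fin N) ℝ) + A)) l k
              * (q l * μo / p l)) • gJ l wstar)
            + (p k)⁻¹ • (∑ l, V k l • Ystar l) = 0) →
          -- initialization `Y_{−1} = 0`
          Y 0 = 0 →
          -- time-varying exact-diffusion primal recursion
          (∀ i k, W (i + 1) k =
            (∑ l, (((2⁻¹ : ℝ) • ((1 : Matrix (Fin N) (Fin N) ℝ) + A)) l k)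
              • (W i l - μ' l i • gJ l (W i l)))
            - (p k)⁻¹ • (∑ l, V k l • Y i l)) →
          -- dual recursion
          (∀ i k, Y (i + 1) k = Y i k + ∑ l, V k l • W (i + 1) l) →
          ∃ C : ℝ, 0 ≤ C ∧ ∃ ρ : ℝ, 0 ≤ ρ ∧ ρ < 1 ∧
            ∀ i : ℕ,
              (∑ k, ‖W (i + 1) k - wstar‖ ^ 2) +
                (∑ k, ‖Y (i + 1) k - Ystar k‖ ^ 2) ≤ C * ρ ^ i := by
  have hVt : Vᵀ = V := by
    have := hV.isHermitian
    rwa [Matrix.IsHermitian, conjTranspose_eq_transpose_of_trivial] at this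
  set P : Matrix (Fin N) (Fin N) ℝ := Matrix.diagonal p with hPdef
  -- Factor the weight `Q = P - V²`, which equals `P Āᵀ`.
  obtain ⟨B, hB⟩ : ∃ B : Matrix (Fin N) (Fin N) ℝ, P - V * V = Bᵀ * B := by
    have hQ : P - V * V = (2⁻¹ : ℝ) • (P + A * P) := by
      rw [hVsq]; ext i j; simp; ring
    have hpsd := posSemidef_half_add A hApos hAleft p hp hAp hbal
    rw [← hPdef, ← hQ] at hpsd
    exact exists_eq_transpose_mul_self hpsd
  have hPA : P * ((2⁻¹ : ℝ) • ((1 : Matrix (Fin N) (Fin N) ℝ) + A))ᵀ = Bᵀ * B := by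
    rw [← hB, hVsq, transpose_smul, transpose_add, transpose_one, Matrix.mul_smul, mul_add,
      mul_one, hbal]
    ext i j; simp; ring
  have hker : ∀ x, V *ᵥ x = 0 → ∀ k l, x k = x l := fun x hx k l =>
    constant_of_mulVec_eq_zero A hAleft hAprim p hp hbal V hVsq x hx k l
  have hV1 : V *ᵥ (fun _ => 1) = 0 := by
    have h1 : (V * V) *ᵥ (fun _ => 1) = 0 := by
      funext j
      rw [hVsq, ← hbal, smul_mulVec, sub_mulVec, ← mulVec_mulVec]
      have : Aᵀ *ᵥ (fun _ => (1 : ℝ)) = fun _ => 1 := by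
        funext k; simpa [mulVec, dotProduct] using hAleft k
      rw [this]; simp
    rw [← mulVec_mulVec] at h1
    exact mulVec_eq_zero_of_mulVec_mulVec V hVt _ h1
  set opV := blockMap (E := EuclideanSpace ℝ (Fin M)) V with hopV
  set opB := blockMap (E := EuclideanSpace ℝ (Fin M)) B with hopB
  set opBt := blockMap (E := EuclideanSpace ℝ (Fin M)) Bᵀ with hopBt
  set opP := blockMap (E := EuclideanSpace ℝ (Fin M)) P with hopP
  set opD := blockMap (E := EuclideanSpace ℝ (Fin M))
    (Matrix.diagonal fun k => q k / p k) with hopD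
  set opI := blockMap (E := EuclideanSpace ℝ (Fin M))
    (Matrix.diagonal fun k => (p k)⁻¹) with hopI
  set opA := blockMap (E := EuclideanSpace ℝ (Fin M))
    ((2⁻¹ : ℝ) • ((1 : Matrix (Fin N) (Fin N) ℝ) + A))ᵀ with hopA
  have hVsymm : ∀ x y, inner ℝ (opV x) y = inner ℝ x (opV y) := fun x y => by
    rw [hopV, inner_blockMap_left, hVt]
  have hBadj : ∀ x y, inner ℝ (opBt x) y = inner ℝ x (opB y) := fun x y => by
    rw [hopBt, inner_blockMap_left, transpose_transpose]
  have hPsplit : ∀ x, opP x = opBt (opB x) + opV (opV x) := fun x => by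
    rw [hopBt, hopB, ← blockMap_mul, ← hB, blockMap_sub, blockMap_mul V V]
    abel
  have hPA' : ∀ x, opP (opA x) = opBt (opB x) := fun x => by
    rw [hopP, hopA, ← blockMap_mul, hPA, blockMap_mul]
  have hPI : ∀ x, opP (opI x) = x := fun x => by
    ext1 k
    rw [hopP, hPdef, blockMap_diagonal_apply, hopI, blockMap_diagonal_apply, smul_smul,
      mul_inv_cancel₀ (hp k).ne', one_smul]
  have hIP : ∀ x, opI (opP x) = x := fun x => by
    ext1 k
    rw [hopI, blockMap_diagonal_apply, hopP, hPdef, blockMap_diagonal_apply, smul_smul,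
      inv_mul_cancel₀ (hp k).ne', one_smul]
  obtain ⟨C₄, hC₄, hlow⟩ := exists_norm_sq_le_energy opV opB opBt opP opI hPsplit hIP
  obtain ⟨C₂, hC₂, hrange⟩ := exists_norm_sq_le_on_range (E := EuclideanSpace ℝ (Fin M)) V hVt
  obtain ⟨C₀, hC₀, hcons⟩ := exists_norm_sq_le_block (E := EuclideanSpace ℝ (Fin M)) V hker k₀
  -- The consensus estimate combined with strong convexity of `J k₀`.
  set C₃ : ℝ := C₀ * (1 / (q k₀ * ν) + 1) with hC₃def
  have hqk := hq k₀
  have hC₃ : 0 < C₃ := by positivity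
  obtain ⟨μbar, hμbar, hdec⟩ := energy_decrease opV opB opBt opP opD hVsymm hBadj hPsplit
    δ C₂ C₃ hδ hC₂ hC₃
  refine ⟨μbar, hμbar, fun μo hμo hμole μ' W Y Ystar _ hμ' hYs hopt hY0 hW hY => ?_⟩
  obtain ⟨c, hc, K, hK, hstep⟩ := hdec μo hμo hμole
  obtain ⟨Xv, hXv⟩ := hYs
  -- Block-vector form of the recursions.
  set Ws : BlockVec N (EuclideanSpace ℝ (Fin M)) := WithLp.toLp 2 fun _ => wstar with hWs
  set Ys : BlockVec N (EuclideanSpace ℝ (Fin M)) := WithLp.toLp 2 Ystar with hYsdef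
  set Gs : BlockVec N (EuclideanSpace ℝ (Fin M)) := WithLp.toLp 2 fun k => gJ k wstar with hGs
  let Wv : ℕ → BlockVec N (EuclideanSpace ℝ (Fin M)) := fun i => WithLp.toLp 2 (W i)
  let Yv : ℕ → BlockVec N (EuclideanSpace ℝ (Fin M)) := fun i => WithLp.toLp 2 (Y i)
  let G : ℕ → BlockVec N (EuclideanSpace ℝ (Fin M)) := fun i =>
    WithLp.toLp 2 fun k => gJ k (W i k)
  let T : ℕ → BlockVec N (EuclideanSpace ℝ (Fin M)) := fun i =>
    WithLp.toLp 2 fun k => μ' k i • gJ k (W i k)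
  have hWrec : ∀ i, Wv (i + 1) = opA (Wv i - T i) - opI (opV (Yv i)) := by
    intro i
    ext1 k
    rw [PiLp.sub_apply, hopI, blockMap_diagonal_apply]
    exact hW i k
  have hYrec : ∀ i, Yv (i + 1) = Yv i + opV (Wv (i + 1)) := fun i => by
    ext1 k; exact hY i k
  have hVWs : opV Ws = 0 := by
    ext1 k
    have h1 := congrFun hV1 k
    simp only [mulVec, dotProduct, mul_one, Pi.zero_apply] at h1
    change ∑ l, V k l • wstar = 0
    rw [← Finset.sum_smul, h1, zero_smul]
  have hAWs : opA Ws = Ws := by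
    have h1 : opP (opA Ws) = opP Ws := by rw [hPA', hPsplit, hVWs, map_zero, add_zero]
    rw [← hIP (opA Ws), h1, hIP]
  have hoptv : opA (μo • opD Gs) + opI (opV Ys) = 0 := by
    ext1 k
    rw [PiLp.add_apply, hopI, blockMap_diagonal_apply]
    refine Eq.trans ?_ (hopt k)
    congr 1
    rw [hopA, blockMap_apply]
    refine Finset.sum_congr rfl fun l _ => ?_
    rw [PiLp.smul_apply, hopD, blockMap_diagonal_apply, smul_smul, smul_smul, transpose_apply]
    change _ • gJ l wstar = _
    congr 1
    ring
  have hYs_range : Ys = opV (WithLp.toLp 2 Xv) := by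
    ext1 k
    rw [hYsdef, hXv]
    rfl
  have hYrange : ∀ i, ∃ x, Yv i - Ys = opV x := by
    intro i
    induction i with
    | zero =>
      refine ⟨-WithLp.toLp 2 Xv, ?_⟩
      have : Yv 0 = 0 := by ext1 k; exact congrFun hY0 k
      rw [this, hYs_range, map_neg, zero_sub]
    | succ i ih =>
      obtain ⟨x, hx⟩ := ih
      refine ⟨x + Wv (i + 1), ?_⟩
      rw [hYrec, map_add, ← hx]; abel
  let e : ℕ → BlockVec N (EuclideanSpace ℝ (Fin M)) := fun i => T i - μo • opD (G i)
  have hGlip : ∀ i, ‖G i - Gs‖ ≤ δ * ‖Wv i - Ws‖ := by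
    intro i
    refine le_of_sq_le_sq ?_ (by positivity)
    rw [mul_pow, PiLp.norm_sq_eq_of_L2, PiLp.norm_sq_eq_of_L2, Finset.mul_sum]
    refine Finset.sum_le_sum fun k _ => ?_
    rw [← mul_pow]
    exact pow_le_pow_left₀ (norm_nonneg _) (hLip k (W i k) wstar) 2
  have hS : ∀ i, inner ℝ (Wv i - Ws) (opP (opD (G i - Gs)))
      = ∑ k, q k * inner ℝ (W i k - wstar) (gJ k (W i k) - gJ k wstar) := by
    intro i
    rw [PiLp.inner_apply]
    refine Finset.sum_congr rfl fun k _ => ?_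
    rw [hopP, hPdef, blockMap_diagonal_apply, hopD, blockMap_diagonal_apply, smul_smul,
      mul_div_cancel₀ _ (hp k).ne', inner_smul_right]
    rfl
  have hterm : ∀ i k, 0 ≤ q k * inner ℝ (W i k - wstar) (gJ k (W i k) - gJ k wstar) :=
    fun i k => mul_nonneg (hq k).le (inner_gradient_sub_nonneg (hgJ k) (hconv k) _ _)
  have hS0 : ∀ i, 0 ≤ inner ℝ (Wv i - Ws) (opP (opD (G i - Gs))) := fun i => by
    rw [hS]; exact Finset.sum_nonneg fun k _ => hterm i k
  have hSC : ∀ i, ‖Wv i - Ws‖ ^ 2 ≤ C₃ * (inner ℝ (Wv i - Ws) (opP (opD (G i - Gs)))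
      + ‖opV (Wv i - Ws)‖ ^ 2) := by
    intro i
    have h1 := hcons (Wv i - Ws)
    have h2 : q k₀ * ν * ‖(Wv i - Ws) k₀‖ ^ 2 ≤
        inner ℝ (Wv i - Ws) (opP (opD (G i - Gs))) := by
      rw [hS, mul_assoc]
      refine le_trans ?_ (Finset.single_le_sum (fun k _ => hterm i k) (Finset.mem_univ k₀))
      exact mul_le_mul_of_nonneg_left (inner_gradient_sub_ge (hgJ k₀) hsc (W i k₀) wstar) hqk.le
    set S := inner ℝ (Wv i - Ws) (opP (opD (G i - Gs))) with hSd
    have h0 := hS0 i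
    have h3 : ‖(Wv i - Ws) k₀‖ ^ 2 ≤ 1 / (q k₀ * ν) * S := by
      rw [one_div_mul_eq_div, le_div_iff₀' (by positivity)]; exact h2
    have h4 : 0 ≤ 1 / (q k₀ * ν) * ‖opV (Wv i - Ws)‖ ^ 2 := by positivity
    calc ‖Wv i - Ws‖ ^ 2 ≤ C₀ * (‖(Wv i - Ws) k₀‖ ^ 2 + ‖opV (Wv i - Ws)‖ ^ 2) := h1
      _ ≤ C₀ * ((1 / (q k₀ * ν) + 1) * (S + ‖opV (Wv i - Ws)‖ ^ 2)) := by
        gcongr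
        linarith
      _ = _ := by rw [hC₃def]; ring
  have he : ∀ i, ‖e i‖ ^ 2 ≤ (ρA ^ 2) ^ i *
      ((h * μo) ^ 2 * (2 * δ ^ 2) * ‖Wv i - Ws‖ ^ 2 + (h * μo) ^ 2 * (2 * ‖Gs‖ ^ 2)) := by
    intro i
    have h1 : ‖e i‖ ^ 2 ≤ (h * μo * ρA ^ (i + 1)) ^ 2 * ‖G i‖ ^ 2 := by
      rw [PiLp.norm_sq_eq_of_L2, PiLp.norm_sq_eq_of_L2, Finset.mul_sum]
      refine Finset.sum_le_sum fun k _ => ?_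
      have h2 : e i k = (μ' k i - q k * μo / p k) • gJ k (W i k) := by
        change μ' k i • gJ k (W i k) - μo • opD (G i) k = _
        rw [hopD, blockMap_diagonal_apply, smul_smul, sub_smul]
        congr 2
        ring
      rw [h2, norm_smul, mul_pow]
      change _ ≤ _ * ‖gJ k (W i k)‖ ^ 2
      gcongr
      exact hμ' k i
    have h3 : ‖G i‖ ≤ δ * ‖Wv i - Ws‖ + ‖Gs‖ := by
      calc ‖G i‖ = ‖(G i - Gs) + Gs‖ := by rw [sub_add_cancel]
        _ ≤ _ := (norm_add_le _ _).trans (by gcongr; exact hGlip i)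
    have h4 : ‖G i‖ ^ 2 ≤ 2 * δ ^ 2 * ‖Wv i - Ws‖ ^ 2 + 2 * ‖Gs‖ ^ 2 := by
      have : ‖G i‖ ^ 2 ≤ (δ * ‖Wv i - Ws‖ + ‖Gs‖) ^ 2 := by gcongr
      nlinarith [sq_nonneg (δ * ‖Wv i - Ws‖ - ‖Gs‖)]
    have h5 : (h * μo * ρA ^ (i + 1)) ^ 2 ≤ (h * μo) ^ 2 * (ρA ^ 2) ^ i := by
      rw [mul_pow, ← pow_mul, ← pow_mul]
      refine mul_le_mul_of_nonneg_left ?_ (by positivity)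
      exact pow_le_pow_of_le_one hρA0.le hρA1.le (by omega)
    calc ‖e i‖ ^ 2 ≤ (h * μo) ^ 2 * (ρA ^ 2) ^ i *
          (2 * δ ^ 2 * ‖Wv i - Ws‖ ^ 2 + 2 * ‖Gs‖ ^ 2) := h1.trans (by gcongr)
      _ = _ := by ring
  have hrec : ∀ i, opBt (opB ((Wv i - Ws) - μo • opD (G i - Gs) - e i - (Wv (i + 1) - Ws)))
        = opV (Yv (i + 1) - Ys) ∧
      Yv (i + 1) - Ys = (Yv i - Ys) + opV (Wv (i + 1) - Ws) := by
    intro i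
    have hdual : Yv (i + 1) - Ys = (Yv i - Ys) + opV (Wv (i + 1) - Ws) := by
      rw [hYrec, map_sub, hVWs]; abel
    refine ⟨?_, hdual⟩
    set z := (Wv i - Ws) - μo • opD (G i - Gs) - e i with hz
    have hz' : z = (Wv i - T i) - Ws + μo • opD Gs := by
      rw [hz, map_sub, smul_sub]; simp only [e]; abel
    have hw : Wv (i + 1) - Ws = opA z - opI (opV (Yv i - Ys)) := by
      have h1 : opA (μo • opD Gs) = - opI (opV Ys) := eq_neg_of_add_eq_zero_left hoptv
      rw [hWrec, hz', map_add, map_sub opA (Wv i - T i), hAWs, h1, map_sub opV, map_sub opI]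
      abel
    have hPw : opP (Wv (i + 1) - Ws) = opBt (opB z) - opV (Yv i - Ys) := by
      rw [hw, map_sub, hPA', hPI]
    have hQw : opBt (opB (Wv (i + 1) - Ws))
        = opP (Wv (i + 1) - Ws) - opV (opV (Wv (i + 1) - Ws)) := by
      rw [hPsplit]; abel
    rw [map_sub opB, map_sub opBt, hQw, hPw, hdual, map_add]
    abel
  obtain ⟨C, hC, ρ, hρ0, hρ1, hfin⟩ := energy_convergence opV opB (fun i => Wv i - Ws)
    (fun i => Yv i - Ys) e hc hK hC₄ (by positivity)
    (by nlinarith : ρA ^ 2 < 1) (by positivity) (by positivity) hlow he (fun i => by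
      obtain ⟨x, hx⟩ := hYrange (i + 1)
      exact hstep _ _ _ _ _ _ (hGlip i) (hSC i) (hS0 i) (hrec i).1 (hrec i).2
        (hrange _ _ hx))
  refine ⟨C, hC, ρ, hρ0, hρ1, fun i => ?_⟩
  have h1 := hfin (i + 1)
  rw [PiLp.norm_sq_eq_of_L2, PiLp.norm_sq_eq_of_L2] at h1
  refine le_trans h1 ?_
  gcongr C * ?_
  exact pow_le_pow_of_le_one hρ0 hρ1.le (Nat.le_succ i)
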